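/- Let $n \ge 3$, $F > 0$, let $\sigma$ denote the surface measure on $\mathbb{S}^{n-2} \subset \mathbb{R}^{n-1}$ normalized so that $\int_{\mathbb{R}^{n-1}} f(Y)\, dY = \int_0^\infty \int_{\mathbb{S}^{n-2}} f(r\omega)\, r^{n-2}\, d\sigma(\omega)\, dr$, and let $\alpha : \mathbb{S}^{n-2} \to \mathbb{R}$ be continuous with $\alpha(\omega) > 0$ for all $\omega$. Define, for $X \in \mathbb{R}$ and $Y \in \mathbb{R}^{n-1} \setminus \{0\}$ with $\hat Y = Y/|Y|$: $\tilde K(X, Y) = e^{-FX}\, |Y|^{1-n} \Big( \chi_{\alpha(\hat Y)}\big(\tfrac{X - \alpha(\hat Y)|Y|^2}{|Y|}\big) + \chi_{\alpha(-\hat Y)}\big(\tfrac{-X + \alpha(-\hat Y)|Y|^2}{|Y|}\big) \Big)$, where $\chi_a(s) = e^{-F s^2/(2a)}$. Then $\tilde K$ is integrable on $\mathbb{R} \times \mathbb{R}^{n-1}$, and for all $\xi \in \mathbb{R}$, $\eta \in \mathbb{R}^{n-1}$: $\int_{\mathbb{R}} \int_{\mathbb{R}^{n-1}} e^{-i(\xi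 X + \eta \cdot Y)}\, \tilde K(X, Y)\, dY\, dX \;=\; \frac{2\pi}{\sqrt{\xi^2 + F^2}} \int_{\mathbb{S}^{n-2}} \exp\!\left(-\frac{F\, (\eta\cdot\omega)^2}{2\,(\xi^2 + F^2)\,\alpha(\omega)}\right) d\sigma(\omega).$ -/

import Mathlib

open MeasureTheory Set
open scoped RealInnerProductSpace

/-!
Completing the square in `X` and taking the `X`-Fourier transform turns each of the two terms of the
kernel into a Gaussian in `|Y|`, whose width depends only on the direction of `Y`, times the weight
`|Y|^{1-d}`, where `d` is the dimension of the space of the `Y`. In polar coordinates the weight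
cancels the Jacobian. What is left on the ray in the direction `ω` is, for the two terms, the
restriction of one even Gaussian on `ℝ` to the two half-lines (the reflection `Y ↦ -Y` exchanges the
terms), so the two rays assemble into the Fourier transform of a Gaussian on the full line at the
frequency `η · ω`. The mass of that Gaussian does not depend on `α(ω)`, whence the integrability.
The polar coordinate formula, applied to indicators of cones, forces `σ = volume.toSphere`.
-/

open Metric (sphere ball)
open Module (finrank)
open NormedSpace (normalize)

section Polar

lemma ae_snd_pos {Ω : Type*} [MeasurableSpace Ω] (σ : Measure Ω) :
    ∀ᵐ p ∂σ.prod (volume.restrict (Ioi (0 : ℝ))), 0 < p.2 :=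
  Measure.quasiMeasurePreserving_snd.ae (ae_restrict_mem measurableSet_Ioi)

lemma map_coe_volumeIoiPow (k : ℕ) : (Measure.volumeIoiPow k).map (↑) =
    (volume.restrict (Ioi (0 : ℝ))).withDensity fun r ↦ ENNReal.ofReal (r ^ k) := by
  ext s hs
  rw [Measure.map_apply measurable_subtype_coe hs, Measure.volumeIoiPow,
    withDensity_apply _ (measurable_subtype_coe hs), withDensity_apply _ hs,
    setLIntegral_subtype measurableSet_Ioi _ fun r : ℝ ↦ ENNReal.ofReal (r ^ k),
    Subtype.image_preimage_coe, Measure.restrict_restrict hs, inter_comm]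

variable {E : Type*} [NormedAddCommGroup E] [NormedSpace ℝ E]

lemma norm_smul_sphere {r : ℝ} (hr : 0 ≤ r) (ω : sphere (0 : E) 1) : ‖r • (ω : E)‖ = r := by
  rw [norm_smul, norm_eq_of_mem_sphere, mul_one, Real.norm_of_nonneg hr]

lemma normalize_smul_sphere {r : ℝ} (hr : 0 < r) (ω : sphere (0 : E) 1) :
    normalize (r • (ω : E)) = ω := by
  rw [NormedSpace.normalize_smul_of_pos hr,
    NormedSpace.normalize_eq_self_of_norm_eq_one (norm_eq_of_mem_sphere ω)]

lemma normalize_mem_sphere {Y : E} (hY : Y ≠ 0) : normalize Y ∈ sphere (0 : E) 1 :=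
  mem_sphere_zero_iff_norm.2 (NormedSpace.norm_normalize hY)

/-- The cone `{r • ω | 0 < r < 1, ω ∈ S}` over a subset `S` of the unit sphere, in the form in
which Mathlib's `MeasureTheory.Measure.toSphere_apply_aux` computes its measure. -/
def unitCone (S : Set (sphere (0 : E) 1)) : Set E :=
  Subtype.val '' (homeomorphUnitSphereProd E ⁻¹' (S ×ˢ Iio ⟨1, mem_Ioi.2 one_pos⟩))

lemma smul_mem_unitCone_iff {S : Set (sphere (0 : E) 1)} {r : ℝ} (hr : 0 < r)
    (ω : sphere (0 : E) 1) : r • (ω : E) ∈ unitCone S ↔ r < 1 ∧ ω ∈ S := by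
  have hcoe : r • (ω : E) = (homeomorphUnitSphereProd E).symm (ω, ⟨r, hr⟩) := by simp
  rw [hcoe, unitCone, Subtype.val_injective.mem_set_image, mem_preimage,
    Homeomorph.apply_symm_apply, mem_prod, and_comm]
  rfl

lemma unitCone_subset_ball (S : Set (sphere (0 : E) 1)) : unitCone S ⊆ ball 0 1 := by
  rintro _ ⟨Y, ⟨-, hY⟩, rfl⟩
  simpa [← Subtype.coe_lt_coe] using hY

variable [MeasurableSpace E]

lemma pow_smul_inv_norm_pow_smul_ae_eq {G : Type*} [NormedAddCommGroup G] [NormedSpace ℝ G]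
    (σ : Measure (sphere (0 : E) 1)) (k : ℕ) (f : E → G) :
    (fun p : sphere (0 : E) 1 × ℝ ↦ (ENNReal.ofReal (p.2 ^ k)).toReal •
      (‖p.2 • (p.1 : E)‖ ^ k)⁻¹ • f (p.2 • (p.1 : E)))
      =ᵐ[σ.prod (volume.restrict (Ioi 0))] fun p ↦ f (p.2 • (p.1 : E)) := by
  filter_upwards [ae_snd_pos σ] with p hp
  rw [norm_smul_sphere hp.le, ENNReal.toReal_ofReal (by positivity), smul_smul,
    mul_inv_cancel₀ (by positivity), one_smul]

lemma integral_indicator_unitCone_smul (σ : Measure (sphere (0 : E) 1))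
    {S : Set (sphere (0 : E) 1)} (hS : MeasurableSet S) {r : ℝ} (hr : 0 < r) :
    ∫ ω, (unitCone S).indicator (fun _ ↦ (1 : ℝ)) (r • (ω : E)) ∂σ =
      (Iio 1).indicator (fun _ ↦ σ.real S) r := by
  have hind : (fun ω : sphere (0 : E) 1 ↦ (unitCone S).indicator (fun _ ↦ (1 : ℝ)) (r • (ω : E))) =
      {ω | r < 1 ∧ ω ∈ S}.indicator fun _ ↦ 1 := by
    ext ω
    exact indicator_eq_indicator (smul_mem_unitCone_iff hr ω) rfl
  rw [hind]
  by_cases hr1 : r < 1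
  · simp only [hr1, true_and, ofPred_mem_eq, indicator_of_mem (mem_Iio.2 hr1)]
    exact integral_indicator_one hS
  · simp [hr1]

variable [BorelSpace E]

lemma measurableSet_unitCone {S : Set (sphere (0 : E) 1)} (hS : MeasurableSet S) :
    MeasurableSet (unitCone S) :=
  (MeasurableEmbedding.subtype_coe (measurableSet_singleton _).compl).measurableSet_image' <|
    (homeomorphUnitSphereProd E).measurable (hS.prod measurableSet_Iio)

lemma toSphere_real_eq_finrank_mul_unitCone (μ : Measure E) {S : Set (sphere (0 : E) 1)}
    (hS : MeasurableSet S) : μ.toSphere.real S = finrank ℝ E * μ.real (unitCone S) := by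
  simp only [Measure.real, μ.toSphere_apply' hS, unitCone, μ.toSphere_apply_aux,
    ENNReal.toReal_mul, ENNReal.toReal_natCast]

variable [FiniteDimensional ℝ E] [Nontrivial E] (μ : Measure E) [μ.IsAddHaarMeasure]

lemma measurePreserving_smul_sphere : MeasurePreserving
    (fun p : sphere (0 : E) 1 × ℝ ↦ p.2 • (p.1 : E))
    ((μ.toSphere.prod (volume.restrict (Ioi 0))).withDensity
      fun p ↦ ENNReal.ofReal (p.2 ^ (finrank ℝ E - 1))) μ := by
  have hpolar : MeasurePreserving (Subtype.val ∘ (homeomorphUnitSphereProd E).symm)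
      (μ.toSphere.prod (.volumeIoiPow (finrank ℝ E - 1))) (μ.restrict {0}ᶜ) :=
    (measurePreserving_subtype_coe (measurableSet_singleton _).compl).comp
      (μ.measurePreserving_homeomorphUnitSphereProd.symm
        (homeomorphUnitSphereProd E).toMeasurableEquiv)
  rw [restrict_compl_singleton] at hpolar
  have hcoe : (μ.toSphere.prod (.volumeIoiPow (finrank ℝ E - 1))).map (Prod.map id (↑)) =
      (μ.toSphere.prod (volume.restrict (Ioi 0))).withDensity
        fun p ↦ ENNReal.ofReal (p.2 ^ (finrank ℝ E - 1)) := by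
    rw [← Measure.map_prod_map _ _ measurable_id measurable_subtype_coe, Measure.map_id,
      map_coe_volumeIoiPow, prod_withDensity_right (by fun_prop)]
  refine ⟨by fun_prop, ?_⟩
  rw [← hcoe, Measure.map_map (by fun_prop) (by fun_prop)]
  convert hpolar.map_eq using 2
  exact funext fun p ↦ (homeomorphUnitSphereProd_symm_apply_coe E p).symm

section Weighted

variable {G : Type*} [NormedAddCommGroup G] [NormedSpace ℝ G]

lemma integral_inv_norm_pow_smul {f : E → G} (hf : AEStronglyMeasurable f μ) :
    ∫ Y, (‖Y‖ ^ (finrank ℝ E - 1))⁻¹ • f Y ∂μ =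
      ∫ p : sphere (0 : E) 1 × ℝ, f (p.2 • (p.1 : E))
        ∂(μ.toSphere.prod (volume.restrict (Ioi 0))) := by
  have hpolar := measurePreserving_smul_sphere μ
  conv_lhs => rw [← hpolar.map_eq]
  rw [integral_map hpolar.aemeasurable,
    integral_withDensity_eq_integral_toReal_smul (by fun_prop) (by simp)]
  · exact integral_congr_ae (pow_smul_inv_norm_pow_smul_ae_eq _ _ f)
  · rw [hpolar.map_eq]
    exact (by fun_prop : Measurable fun Y : E ↦ (‖Y‖ ^ (finrank ℝ E - 1))⁻¹)
      |>.aestronglyMeasurable.smul hf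

lemma integrable_inv_norm_pow_smul_iff {f : E → G} (hf : AEStronglyMeasurable f μ) :
    Integrable (fun Y ↦ (‖Y‖ ^ (finrank ℝ E - 1))⁻¹ • f Y) μ ↔
      Integrable (fun p : sphere (0 : E) 1 × ℝ ↦ f (p.2 • (p.1 : E)))
        (μ.toSphere.prod (volume.restrict (Ioi 0))) := by
  have hweight : Measurable fun Y : E ↦ (‖Y‖ ^ (finrank ℝ E - 1))⁻¹ := by fun_prop
  refine ((measurePreserving_smul_sphere μ).integrable_comp
    (hweight.aestronglyMeasurable.smul hf)).symm.trans ?_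
  rw [integrable_withDensity_iff_integrable_smul' (by fun_prop) (by simp)]
  exact integrable_congr (pow_smul_inv_norm_pow_smul_ae_eq _ _ f)

end Weighted

lemma measureReal_eq_toSphere_real {σ : Measure (sphere (0 : E) 1)}
    (hσ : ∀ f : E → ℝ, Integrable f μ → ∫ Y, f Y ∂μ =
      ∫ r in Ioi (0 : ℝ), (∫ ω, f (r • (ω : E)) ∂σ) * r ^ (finrank ℝ E - 1))
    {S : Set (sphere (0 : E) 1)} (hS : MeasurableSet S) : σ.real S = μ.toSphere.real S := by
  have hd : 0 < finrank ℝ E := Module.finrank_pos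
  have hC := measurableSet_unitCone hS
  have hCfin : μ (unitCone S) ≠ ⊤ :=
    ((measure_mono (unitCone_subset_ball S)).trans_lt Metric.isBounded_ball.measure_lt_top).ne
  have hcone := calc
    μ.real (unitCone S) = ∫ Y, (unitCone S).indicator (fun _ ↦ 1) Y ∂μ :=
      (integral_indicator_one hC).symm
    _ = ∫ r in Ioi (0 : ℝ), (Iio 1).indicator (fun r ↦ σ.real S * r ^ (finrank ℝ E - 1)) r := by
      rw [hσ _ ((integrable_indicator_iff hC).2 (integrableOn_const hCfin))]
      refine setIntegral_congr_fun measurableSet_Ioi fun r hr ↦ ?_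
      simp only [integral_indicator_unitCone_smul σ hS hr, indicator_apply, ite_mul, zero_mul]
    _ = ∫ r in (0 : ℝ)..1, σ.real S * r ^ (finrank ℝ E - 1) := by
      rw [setIntegral_indicator measurableSet_Iio, Ioi_inter_Iio,
        intervalIntegral.integral_of_le zero_le_one, integral_Ioc_eq_integral_Ioo]
    _ = σ.real S / finrank ℝ E := by
      simp [integral_pow, Nat.sub_add_cancel hd, Nat.cast_pred hd, div_eq_mul_inv, hd.ne']
  rw [toSphere_real_eq_finrank_mul_unitCone μ hS, hcone, mul_div_cancel₀ _ (by positivity)]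

lemma eq_toSphere_of_integral_eq {σ : Measure (sphere (0 : E) 1)}
    (hσ : ∀ f : E → ℝ, Integrable f μ → ∫ Y, f Y ∂μ =
      ∫ r in Ioi (0 : ℝ), (∫ ω, f (r • (ω : E)) ∂σ) * r ^ (finrank ℝ E - 1)) :
    σ = μ.toSphere := by
  have huniv : 0 < σ.real univ := by
    rw [measureReal_eq_toSphere_real μ hσ .univ]
    have : NeZero μ.toSphere := ⟨μ.toSphere_ne_zero⟩
    exact measureReal_univ_pos
  have : IsFiniteMeasure σ := ⟨(ENNReal.toReal_pos_iff.1 huniv).2⟩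
  exact Measure.ext fun S hS ↦
    (measureReal_eq_measureReal_iff).1 (measureReal_eq_toSphere_real μ hσ hS)

end Polar

section LineTransforms

lemma integrable_cexp_neg_I_mul {Ω : Type*} [MeasurableSpace Ω] {μ : Measure Ω} {φ f : Ω → ℝ}
    (hφ : AEMeasurable φ μ) (hf : Integrable f μ) :
    Integrable (fun x ↦ Complex.exp (-(Complex.I * φ x)) * f x) μ := by
  refine hf.ofReal.bdd_mul (c := 1) (AEMeasurable.aestronglyMeasurable (by fun_prop)) ?_
  exact .of_forall fun x ↦ by simp [Complex.norm_exp]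

lemma integral_Ioi_add_comp_neg {G : Type*} [NormedAddCommGroup G] [NormedSpace ℝ G] {f : ℝ → G}
    (hf : Integrable f) : ∫ x in Ioi 0, (f x + f (-x)) = ∫ x, f x := by
  rw [integral_add hf.integrableOn hf.comp_neg.integrableOn, integral_comp_neg_Ioi, neg_zero,
    add_comm, intervalIntegral.integral_Iic_add_Ioi hf.integrableOn hf.integrableOn]

lemma integral_cexp_mul_exp_neg_mul_sq {c : ℝ} (hc : 0 < c) (t : ℝ) :
    ∫ x : ℝ, Complex.exp (-(Complex.I * (t * x : ℝ))) * (Real.exp (-c * x ^ 2) : ℝ) =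
      (√(Real.pi / c) * Real.exp (-(t ^ 2 / (4 * c))) : ℝ) := by
  have h := fourierIntegral_gaussian (b := (c : ℂ)) (by simpa using hc) (-t : ℂ)
  rw [Real.sqrt_eq_rpow, Complex.ofReal_mul, Complex.ofReal_cpow (by positivity)]
  push_cast
  convert h using 3 <;> ring_nf

/-- The profile along a line in the direction `ω`, with `a = α(ω)`, of the `X`-Fourier transform
of the kernel at frequency `ξ`, once the weight `|Y|^{1-d}` of polar coordinates is removed. -/
noncomputable def lineProfile (F ξ a r : ℝ) : ℝ :=
  √(2 * Real.pi * a / F) * Real.exp (-(a * (ξ ^ 2 + F ^ 2) / (2 * F)) * r ^ 2)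

lemma lineProfile_nonneg (F ξ a r : ℝ) : 0 ≤ lineProfile F ξ a r := by
  unfold lineProfile
  positivity

lemma lineProfile_neg (F ξ a r : ℝ) : lineProfile F ξ a (-r) = lineProfile F ξ a r := by
  rw [lineProfile, neg_sq, lineProfile]

lemma measurable_lineProfile (F ξ : ℝ) : Measurable fun q : ℝ × ℝ ↦ lineProfile F ξ q.1 q.2 := by
  unfold lineProfile
  fun_prop

variable {F : ℝ} (hF : 0 < F) (ξ : ℝ)
include hF

lemma integrable_lineProfile {a : ℝ} (ha : 0 < a) : Integrable (lineProfile F ξ a) :=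
  (integrable_exp_neg_mul_sq (by positivity)).const_mul _

lemma integral_cexp_mul_lineProfile {a : ℝ} (ha : 0 < a) (t : ℝ) :
    ∫ r : ℝ, Complex.exp (-(Complex.I * (t * r : ℝ))) * lineProfile F ξ a r =
      (2 * Real.pi / √(ξ ^ 2 + F ^ 2) *
        Real.exp (-(F * t ^ 2 / (2 * (ξ ^ 2 + F ^ 2) * a))) : ℝ) := by
  have : 0 < ξ ^ 2 + F ^ 2 := by positivity
  have hc : 0 < a * (ξ ^ 2 + F ^ 2) / (2 * F) := by positivity
  have hamplitude : √(2 * Real.pi * a / F) * √(Real.pi / (a * (ξ ^ 2 + F ^ 2) / (2 * F))) =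
      2 * Real.pi / √(ξ ^ 2 + F ^ 2) := by
    rw [← Real.sqrt_mul (by positivity), show 2 * Real.pi * a / F *
        (Real.pi / (a * (ξ ^ 2 + F ^ 2) / (2 * F))) = (2 * Real.pi) ^ 2 / (ξ ^ 2 + F ^ 2) by
          field_simp, Real.sqrt_div (by positivity), Real.sqrt_sq (by positivity)]
  have hexponent : t ^ 2 / (4 * (a * (ξ ^ 2 + F ^ 2) / (2 * F))) =
      F * t ^ 2 / (2 * (ξ ^ 2 + F ^ 2) * a) := by
    field_simp
    norm_num
  simp only [lineProfile, Complex.ofReal_mul √_, mul_left_comm _ (√_ : ℂ)]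
  rw [integral_const_mul, integral_cexp_mul_exp_neg_mul_sq hc, ← Complex.ofReal_mul, ← mul_assoc,
    hamplitude, hexponent]

lemma integral_lineProfile {a : ℝ} (ha : 0 < a) :
    ∫ r, lineProfile F ξ a r = 2 * Real.pi / √(ξ ^ 2 + F ^ 2) := by
  have h := integral_cexp_mul_lineProfile hF ξ ha 0
  simp only [zero_mul, Complex.ofReal_zero, mul_zero, neg_zero, Complex.exp_zero, one_mul] at h
  rw [integral_complex_ofReal, Complex.ofReal_inj] at h
  simpa using h

lemma integrable_prod_lineProfile {Ω : Type*} [MeasurableSpace Ω] (σ : Measure Ω)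
    [IsFiniteMeasure σ] {a : Ω → ℝ} (ha : Measurable a) (hpos : ∀ ω, 0 < a ω) (s : Set ℝ) :
    Integrable (fun p : Ω × ℝ ↦ lineProfile F ξ (a p.1) p.2) (σ.prod (volume.restrict s)) := by
  have hmeas : Measurable fun p : Ω × ℝ ↦ lineProfile F ξ (a p.1) p.2 :=
    (measurable_lineProfile F ξ).comp (by fun_prop : Measurable fun p : Ω × ℝ ↦ (a p.1, p.2))
  have hline : Integrable (fun p : Ω × ℝ ↦ lineProfile F ξ (a p.1) p.2) (σ.prod volume) := by
    refine (integrable_prod_iff hmeas.aestronglyMeasurable).2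
      ⟨.of_forall fun ω ↦ integrable_lineProfile hF ξ (hpos ω), ?_⟩
    simp only [Real.norm_of_nonneg (lineProfile_nonneg ..), integral_lineProfile hF ξ (hpos _)]
    exact integrable_const _
  exact hline.mono_measure (Measure.prod_mono le_rfl Measure.restrict_le_self)

end LineTransforms

section Kernel

/-- The Gaussian cutoff `χ_a(s) = e^{-F s² / (2 a)}`. -/
noncomputable def gaussianCutoff (F a s : ℝ) : ℝ :=
  Real.exp (-(F * s ^ 2 / (2 * a)))

lemma gaussianCutoff_neg (F a s : ℝ) : gaussianCutoff F a (-s) = gaussianCutoff F a s := by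
  rw [gaussianCutoff, neg_sq, gaussianCutoff]

lemma exp_neg_mul_gaussianCutoff (F X : ℝ) {a r : ℝ} (ha : a ≠ 0) (hr : r ≠ 0) :
    Real.exp (-(F * X)) * gaussianCutoff F a ((X - a * r ^ 2) / r) =
      Real.exp (-(F * a / 2 * r ^ 2)) * Real.exp (-(F / (2 * a * r ^ 2)) * X ^ 2) := by
  rw [gaussianCutoff, ← Real.exp_add, ← Real.exp_add]
  congr 1
  field_simp
  ring

lemma integrable_exp_neg_mul_gaussianCutoff {F a r : ℝ} (hF : 0 < F) (ha : 0 < a) (hr : 0 < r) :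
    Integrable fun X ↦ Real.exp (-(F * X)) * gaussianCutoff F a ((X - a * r ^ 2) / r) := by
  simp only [exp_neg_mul_gaussianCutoff F _ ha.ne' hr.ne']
  exact (integrable_exp_neg_mul_sq (by positivity)).const_mul _

lemma integral_cexp_mul_exp_neg_mul_gaussianCutoff {F a r : ℝ} (hF : 0 < F) (ξ : ℝ) (ha : 0 < a)
    (hr : 0 < r) :
    ∫ X : ℝ, Complex.exp (-(Complex.I * (ξ * X : ℝ))) *
        (Real.exp (-(F * X)) * gaussianCutoff F a ((X - a * r ^ 2) / r) : ℝ) =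
      (r * lineProfile F ξ a r : ℝ) := by
  have hamplitude : √(Real.pi / (F / (2 * a * r ^ 2))) = r * √(2 * Real.pi * a / F) := by
    rw [show Real.pi / (F / (2 * a * r ^ 2)) = r ^ 2 * (2 * Real.pi * a / F) by field_simp,
      Real.sqrt_mul (by positivity), Real.sqrt_sq hr.le]
  have hexponent : -(F * a / 2 * r ^ 2) + -(ξ ^ 2 / (4 * (F / (2 * a * r ^ 2)))) =
      -(a * (ξ ^ 2 + F ^ 2) / (2 * F)) * r ^ 2 := by
    field_simp
    ring
  simp only [exp_neg_mul_gaussianCutoff F _ ha.ne' hr.ne',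
    Complex.ofReal_mul (Real.exp (-(F * a / 2 * r ^ 2))), mul_left_comm (Complex.exp _)]
  rw [integral_const_mul, integral_cexp_mul_exp_neg_mul_sq (by positivity), ← Complex.ofReal_mul,
    mul_left_comm, ← Real.exp_add, hamplitude, hexponent, lineProfile, mul_assoc]

lemma integral_exp_neg_mul_gaussianCutoff {F a r : ℝ} (hF : 0 < F) (ha : 0 < a) (hr : 0 < r) :
    ∫ X : ℝ, Real.exp (-(F * X)) * gaussianCutoff F a ((X - a * r ^ 2) / r) =
      r * lineProfile F 0 a r := by
  have h := integral_cexp_mul_exp_neg_mul_gaussianCutoff hF 0 ha hr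
  simp only [zero_mul, Complex.ofReal_zero, mul_zero, neg_zero, Complex.exp_zero, one_mul] at h
  rwa [integral_complex_ofReal, Complex.ofReal_inj] at h

variable {E : Type*} [NormedAddCommGroup E] [NormedSpace ℝ E]

/-- The first of the two summands of `K̃(X, Y)`, including the factor `e^{-FX} |Y|^{-d}`; the second
one is its reflection in `Y`. -/
noncomputable def halfKernel (F : ℝ) (α : E → ℝ) (X : ℝ) (Y : E) : ℝ :=
  (‖Y‖ ^ finrank ℝ E)⁻¹ * (Real.exp (-(F * X)) *
    gaussianCutoff F (α (normalize Y)) ((X - α (normalize Y) * ‖Y‖ ^ 2) / ‖Y‖))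

lemma halfKernel_nonneg (F : ℝ) (α : E → ℝ) (X : ℝ) (Y : E) : 0 ≤ halfKernel F α X Y := by
  unfold halfKernel gaussianCutoff
  positivity

/-- The kernel `K̃(X, Y)`. The paper's `Y` ranges over a space of dimension `d = n - 1`, so its
weight `|Y|^{1-n}` is `|Y|^{-d}`. -/
noncomputable def boundaryKernel (F : ℝ) (α : E → ℝ) (X : ℝ) (Y : E) : ℝ :=
  Real.exp (-(F * X)) * (‖Y‖ ^ finrank ℝ E)⁻¹ *
    (gaussianCutoff F (α (normalize Y)) ((X - α (normalize Y) * ‖Y‖ ^ 2) / ‖Y‖) +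
      gaussianCutoff F (α (-normalize Y)) ((-X + α (-normalize Y) * ‖Y‖ ^ 2) / ‖Y‖))

lemma eq_boundaryKernel {n : ℕ} (hn : finrank ℝ E + 1 = n) {F : ℝ} {α : E → ℝ} {K : ℝ → E → ℝ}
    (hK : ∀ X Y, K X Y = Real.exp (-(F * X)) * ‖Y‖ ^ ((1 : ℝ) - n) *
      (Real.exp (-(F * ((X - α (‖Y‖⁻¹ • Y) * ‖Y‖ ^ 2) / ‖Y‖) ^ 2 / (2 * α (‖Y‖⁻¹ • Y)))) +
        Real.exp (-(F * ((-X + α (-(‖Y‖⁻¹ • Y)) * ‖Y‖ ^ 2) / ‖Y‖) ^ 2 /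
          (2 * α (-(‖Y‖⁻¹ • Y))))))) : K = boundaryKernel F α := by
  funext X Y
  have hweight : ‖Y‖ ^ ((1 : ℝ) - n) = (‖Y‖ ^ finrank ℝ E)⁻¹ := by
    rw [← Real.rpow_natCast, ← Real.rpow_neg (norm_nonneg _), ← hn]
    push_cast
    ring_nf
  rw [hK, hweight]
  rfl

lemma boundaryKernel_eq_halfKernel_add (F : ℝ) (α : E → ℝ) (X : ℝ) (Y : E) :
    boundaryKernel F α X Y = halfKernel F α X Y + halfKernel F α X (-Y) := by
  have heven : (-X + α (-normalize Y) * ‖Y‖ ^ 2) / ‖Y‖ =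
      -((X - α (-normalize Y) * ‖Y‖ ^ 2) / ‖Y‖) := by ring
  rw [boundaryKernel, halfKernel, halfKernel, heven, gaussianCutoff_neg, norm_neg,
    NormedSpace.normalize_neg]
  ring

lemma inv_norm_pow_finrank_mul [FiniteDimensional ℝ E] {Y : E} (hY : Y ≠ 0) (c : ℝ) :
    (‖Y‖ ^ finrank ℝ E)⁻¹ * (‖Y‖ * c) = (‖Y‖ ^ (finrank ℝ E - 1))⁻¹ * c := by
  have : Nontrivial E := ⟨Y, 0, hY⟩
  rw [← pow_sub_one_mul Module.finrank_pos.ne' ‖Y‖, mul_inv, mul_assoc,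
    inv_mul_cancel_left₀ (norm_ne_zero_iff.2 hY)]

section Slices

variable {F : ℝ} (hF : 0 < F) {α : E → ℝ} (hpos : ∀ ω ∈ sphere (0 : E) 1, 0 < α ω)
  {Y : E} (hY : Y ≠ 0)
include hF hpos hY

lemma integrable_halfKernel_left : Integrable (halfKernel F α · Y) :=
  (integrable_exp_neg_mul_gaussianCutoff hF (hpos _ (normalize_mem_sphere hY))
    (norm_pos_iff.2 hY)).const_mul _

variable [FiniteDimensional ℝ E]

lemma integral_halfKernel_left : ∫ X, halfKernel F α X Y =
    (‖Y‖ ^ (finrank ℝ E - 1))⁻¹ * lineProfile F 0 (α (normalize Y)) ‖Y‖ := by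
  simp only [halfKernel]
  rw [integral_const_mul, integral_exp_neg_mul_gaussianCutoff hF
    (hpos _ (normalize_mem_sphere hY)) (norm_pos_iff.2 hY), inv_norm_pow_finrank_mul hY]

lemma integral_cexp_mul_halfKernel_left (ξ : ℝ) :
    ∫ X : ℝ, Complex.exp (-(Complex.I * (ξ * X : ℝ))) * halfKernel F α X Y =
      ((‖Y‖ ^ (finrank ℝ E - 1))⁻¹ * lineProfile F ξ (α (normalize Y)) ‖Y‖ : ℝ) := by
  simp only [halfKernel, Complex.ofReal_mul (_⁻¹), mul_left_comm (Complex.exp _)]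
  rw [integral_const_mul, integral_cexp_mul_exp_neg_mul_gaussianCutoff hF ξ
    (hpos _ (normalize_mem_sphere hY)) (norm_pos_iff.2 hY), ← Complex.ofReal_mul (_⁻¹),
    inv_norm_pow_finrank_mul hY, Complex.ofReal_mul]

end Slices

variable [MeasurableSpace E]

lemma lineProfile_smul_ae_eq (σ : Measure (sphere (0 : E) 1)) (F ξ : ℝ) (α : E → ℝ) :
    (fun p : sphere (0 : E) 1 × ℝ ↦
      lineProfile F ξ (α (normalize (p.2 • (p.1 : E)))) ‖p.2 • (p.1 : E)‖)
      =ᵐ[σ.prod (volume.restrict (Ioi 0))] fun p ↦ lineProfile F ξ (α p.1) p.2 := by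
  filter_upwards [ae_snd_pos σ] with p hp
  rw [normalize_smul_sphere hp, norm_smul_sphere hp.le]

variable [BorelSpace E]

lemma aemeasurable_comp_normalize {μ : Measure E} [NullSingletonClass μ] {α : E → ℝ}
    (hα : Measurable ((sphere (0 : E) 1).domRestrict α)) :
    AEMeasurable (fun Y ↦ α (normalize Y)) μ := by
  obtain ⟨β, hβ, hβα⟩ := (MeasurableEmbedding.subtype_coe
    Metric.isClosed_sphere.measurableSet).exists_measurable_extend hα fun _ ↦ inferInstance
  refine ⟨fun Y ↦ β (normalize Y), ?_, ?_⟩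
  · unfold NormedSpace.normalize
    fun_prop
  · filter_upwards [Measure.ae_ne μ 0] with Y hY
    exact (congr_fun hβα ⟨normalize Y, normalize_mem_sphere hY⟩).symm

variable [FiniteDimensional ℝ E] [Nontrivial E] (μ : Measure E) [μ.IsAddHaarMeasure] {α : E → ℝ}
  (hα : Measurable ((sphere (0 : E) 1).domRestrict α))
include hα

lemma aestronglyMeasurable_lineProfile (F ξ : ℝ) :
    AEStronglyMeasurable (fun Y ↦ lineProfile F ξ (α (normalize Y)) ‖Y‖) μ :=
  ((measurable_lineProfile F ξ).comp_aemeasurable <|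
    (aemeasurable_comp_normalize hα).prodMk measurable_norm.aemeasurable).aestronglyMeasurable

lemma aestronglyMeasurable_halfKernel (F : ℝ) :
    AEStronglyMeasurable (fun p : ℝ × E ↦ halfKernel F α p.1 p.2) (volume.prod μ) := by
  have hscalar : Measurable fun q : (ℝ × ℝ) × ℝ ↦ (q.1.2 ^ finrank ℝ E)⁻¹ *
      (Real.exp (-(F * q.1.1)) * gaussianCutoff F q.2 ((q.1.1 - q.2 * q.1.2 ^ 2) / q.1.2)) := by
    unfold gaussianCutoff
    fun_prop
  have hnorm : AEMeasurable (fun p : ℝ × E ↦ (p.1, ‖p.2‖)) (volume.prod μ) := by fun_prop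
  exact (hscalar.comp_aemeasurable <|
    hnorm.prodMk (aemeasurable_comp_normalize hα).comp_snd).aestronglyMeasurable

variable {F : ℝ} (hF : 0 < F) (hpos : ∀ ω ∈ sphere (0 : E) 1, 0 < α ω)
include hF hpos

lemma integrable_inv_norm_pow_mul_lineProfile (ξ : ℝ) :
    Integrable (fun Y ↦ (‖Y‖ ^ (finrank ℝ E - 1))⁻¹ * lineProfile F ξ (α (normalize Y)) ‖Y‖) μ :=
  (integrable_inv_norm_pow_smul_iff μ (aestronglyMeasurable_lineProfile μ hα F ξ)).2 <|
    (integrable_congr (lineProfile_smul_ae_eq μ.toSphere F ξ α)).2 <|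
      integrable_prod_lineProfile hF ξ μ.toSphere hα (fun ω ↦ hpos ω ω.2) _

lemma integrable_halfKernel :
    Integrable (fun p : ℝ × E ↦ halfKernel F α p.1 p.2) (volume.prod μ) := by
  refine (integrable_prod_iff' (aestronglyMeasurable_halfKernel μ hα F)).2 ⟨?_, ?_⟩
  · filter_upwards [Measure.ae_ne μ 0] with Y hY
    exact integrable_halfKernel_left hF hpos hY
  · refine (integrable_inv_norm_pow_mul_lineProfile μ hα hF hpos 0).congr ?_
    filter_upwards [Measure.ae_ne μ 0] with Y hY
    simp only [Real.norm_of_nonneg (halfKernel_nonneg ..), integral_halfKernel_left hF hpos hY]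

lemma integral_cexp_mul_halfKernel (ξ : ℝ) (η : StrongDual ℝ E) :
    ∫ p : ℝ × E, Complex.exp (-(Complex.I * (ξ * p.1 + η p.2 : ℝ))) * halfKernel F α p.1 p.2
        ∂(volume.prod μ) =
      ∫ p : sphere (0 : E) 1 × ℝ, Complex.exp (-(Complex.I * (η p.1 * p.2 : ℝ))) *
        lineProfile F ξ (α p.1) p.2 ∂(μ.toSphere.prod (volume.restrict (Ioi 0))) := by
  have hmeas : AEStronglyMeasurable (fun Y ↦ Complex.exp (-(Complex.I * (η Y : ℝ))) *
      lineProfile F ξ (α (normalize Y)) ‖Y‖) μ :=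
    (by fun_prop : Continuous fun Y ↦ Complex.exp (-(Complex.I * (η Y : ℝ))))
      |>.aestronglyMeasurable.mul <| Complex.continuous_ofReal.comp_aestronglyMeasurable <|
        aestronglyMeasurable_lineProfile μ hα F ξ
  calc
    _ = ∫ Y, (∫ X : ℝ, Complex.exp (-(Complex.I * (ξ * X + η Y : ℝ))) * halfKernel F α X Y) ∂μ :=
      integral_prod_symm _ (integrable_cexp_neg_I_mul (by fun_prop)
        (integrable_halfKernel μ hα hF hpos))
    _ = ∫ Y, (‖Y‖ ^ (finrank ℝ E - 1))⁻¹ • (Complex.exp (-(Complex.I * (η Y : ℝ))) *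
        lineProfile F ξ (α (normalize Y)) ‖Y‖) ∂μ := by
      refine integral_congr_ae ?_
      filter_upwards [Measure.ae_ne μ 0] with Y hY
      simp only [Complex.ofReal_add, mul_add, neg_add_rev, Complex.exp_add, mul_assoc]
      rw [integral_const_mul, integral_cexp_mul_halfKernel_left hF hpos hY, Complex.ofReal_mul,
        mul_left_comm, Complex.real_smul]
    _ = _ := by
      rw [integral_inv_norm_pow_smul μ hmeas]
      refine integral_congr_ae ?_
      filter_upwards [lineProfile_smul_ae_eq μ.toSphere F ξ α] with p hp
      rw [hp, map_smul, smul_eq_mul, mul_comm (p.2)]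

lemma integrable_halfKernel_comp_neg :
    Integrable (fun p : ℝ × E ↦ halfKernel F α p.1 (-p.2)) (volume.prod μ) :=
  ((MeasurePreserving.id volume).prod
    (Measure.measurePreserving_neg μ)).integrable_comp_of_integrable
      (integrable_halfKernel μ hα hF hpos)

lemma integral_cexp_mul_halfKernel_comp_neg (ξ : ℝ) (η : StrongDual ℝ E) :
    ∫ p : ℝ × E, Complex.exp (-(Complex.I * (ξ * p.1 + η p.2 : ℝ))) * halfKernel F α p.1 (-p.2)
        ∂(volume.prod μ) =
      ∫ p : sphere (0 : E) 1 × ℝ, Complex.exp (-(Complex.I * (η p.1 * -p.2 : ℝ))) *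
        lineProfile F ξ (α p.1) (-p.2) ∂(μ.toSphere.prod (volume.restrict (Ioi 0))) := by
  let reflect : ℝ × E ≃ᵐ ℝ × E := (MeasurableEquiv.refl ℝ).prodCongr (MeasurableEquiv.neg E)
  have hreflect : MeasurePreserving reflect (volume.prod μ) (volume.prod μ) :=
    (MeasurePreserving.id volume).prod (Measure.measurePreserving_neg μ)
  have h := integral_cexp_mul_halfKernel μ hα hF hpos ξ (-η)
  rw [← hreflect.integral_comp'] at h
  have hreflect_apply (p : ℝ × E) : reflect p = (p.1, -p.2) := rfl
  simpa only [hreflect_apply, neg_apply, map_neg, neg_neg, neg_mul, mul_neg,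
    lineProfile_neg] using h

lemma integrable_boundaryKernel :
    Integrable (fun p : ℝ × E ↦ boundaryKernel F α p.1 p.2) (volume.prod μ) := by
  simp only [boundaryKernel_eq_halfKernel_add]
  exact (integrable_halfKernel μ hα hF hpos).add (integrable_halfKernel_comp_neg μ hα hF hpos)

lemma integral_cexp_mul_boundaryKernel (ξ : ℝ) (η : StrongDual ℝ E) :
    ∫ p : ℝ × E, Complex.exp (-(Complex.I * (ξ * p.1 + η p.2 : ℝ))) * boundaryKernel F α p.1 p.2
        ∂(volume.prod μ) =
      (2 * Real.pi / √(ξ ^ 2 + F ^ 2) * ∫ ω : sphere (0 : E) 1,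
        Real.exp (-(F * η ω ^ 2 / (2 * (ξ ^ 2 + F ^ 2) * α ω))) ∂μ.toSphere : ℝ) := by
  let ψ (ω : sphere (0 : E) 1) (r : ℝ) : ℂ :=
    Complex.exp (-(Complex.I * (η ω * r : ℝ))) * lineProfile F ξ (α ω) r
  have hψ (ω : sphere (0 : E) 1) : Integrable (ψ ω) :=
    integrable_cexp_neg_I_mul (by fun_prop) (integrable_lineProfile hF ξ (hpos ω ω.2))
  have hL := integrable_prod_lineProfile hF ξ μ.toSphere hα (fun ω ↦ hpos ω ω.2) (Ioi 0)
  have hplus : Integrable (fun p : sphere (0 : E) 1 × ℝ ↦ ψ p.1 p.2)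
      (μ.toSphere.prod (volume.restrict (Ioi 0))) :=
    integrable_cexp_neg_I_mul (by fun_prop) hL
  have hminus : Integrable (fun p : sphere (0 : E) 1 × ℝ ↦ ψ p.1 (-p.2))
      (μ.toSphere.prod (volume.restrict (Ioi 0))) := by
    simp only [ψ, lineProfile_neg]
    exact integrable_cexp_neg_I_mul (by fun_prop) hL
  calc
    _ = ∫ p : sphere (0 : E) 1 × ℝ, (ψ p.1 p.2 + ψ p.1 (-p.2))
        ∂(μ.toSphere.prod (volume.restrict (Ioi 0))) := by
      simp only [boundaryKernel_eq_halfKernel_add, Complex.ofReal_add (halfKernel ..),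
        mul_add (Complex.exp _)]
      rw [integral_add (integrable_cexp_neg_I_mul (by fun_prop)
            (integrable_halfKernel μ hα hF hpos))
          (integrable_cexp_neg_I_mul (by fun_prop) (integrable_halfKernel_comp_neg μ hα hF hpos)),
        integral_cexp_mul_halfKernel μ hα hF hpos,
        integral_cexp_mul_halfKernel_comp_neg μ hα hF hpos,
        ← integral_add hplus hminus]
    _ = ∫ ω, (∫ r in Ioi 0, (ψ ω r + ψ ω (-r))) ∂μ.toSphere := integral_prod _ (hplus.add hminus)
    _ = ∫ ω, (∫ r, ψ ω r) ∂μ.toSphere := by simp only [integral_Ioi_add_comp_neg (hψ _)]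
    _ = _ := by
      simp only [ψ, integral_cexp_mul_lineProfile hF ξ (hpos _ (Subtype.prop _))]
      rw [integral_complex_ofReal, integral_const_mul]

end Kernel

theorem stmt12_general {E : Type*} [NormedAddCommGroup E] [NormedSpace ℝ E] [Nontrivial E]
    [FiniteDimensional ℝ E] [MeasurableSpace E] [BorelSpace E] (μ : Measure E) [μ.IsAddHaarMeasure]
    {F : ℝ} (hF : 0 < F) (σ : Measure (sphere (0 : E) 1))
    (hσ : ∀ f : E → ℝ, Integrable f μ → ∫ Y, f Y ∂μ =
      ∫ r in Ioi (0 : ℝ), (∫ ω, f (r • (ω : E)) ∂σ) * r ^ (finrank ℝ E - 1))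
    {α : E → ℝ} (hα : Measurable ((sphere (0 : E) 1).domRestrict α))
    (hαpos : ∀ ω ∈ sphere (0 : E) 1, 0 < α ω) :
    Integrable (fun p : ℝ × E ↦ boundaryKernel F α p.1 p.2) (volume.prod μ) ∧
    ∀ (ξ : ℝ) (η : StrongDual ℝ E),
      ∫ X : ℝ, (∫ Y, Complex.exp (-(Complex.I * (ξ * X + η Y : ℝ))) * boundaryKernel F α X Y ∂μ) =
        (2 * Real.pi / √(ξ ^ 2 + F ^ 2) * ∫ ω : sphere (0 : E) 1,
          Real.exp (-(F * η ω ^ 2 / (2 * (ξ ^ 2 + F ^ 2) * α ω))) ∂σ : ℝ) := by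
  obtain rfl := eq_toSphere_of_integral_eq μ hσ
  have hK := integrable_boundaryKernel μ hα hF hαpos
  refine ⟨hK, fun ξ η ↦ ?_⟩
  rw [← integral_cexp_mul_boundaryKernel μ hα hF hαpos]
  exact (integral_prod _ (integrable_cexp_neg_I_mul
    (φ := fun p : ℝ × E ↦ ξ * p.1 + η p.2) (by fun_prop) hK)).symm

/-- The `(X,Y)`-Fourier transform of the boundary Schwartz kernel `K̃` of the
conjugated normal operator `A_F` with Gaussian cutoff `χ_a(s) = e^{-Fs²/(2a)}`:
`K̃` is integrable and its Fourier transform equals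
`(2π/√(ξ²+F²)) ∫_{S^{n-2}} exp(-F(η·ω)²/(2(ξ²+F²)α(ω))) dσ(ω)`. -/
theorem stmt12 (n : ℕ) (hn : 3 ≤ n) (F : ℝ) (hF : 0 < F)
    (σ : Measure ↥(Metric.sphere (0 : EuclideanSpace ℝ (Fin (n - 1))) 1))
    (hσ : ∀ f : EuclideanSpace ℝ (Fin (n - 1)) → ℝ, Integrable f →
      ∫ Y, f Y = ∫ r in Set.Ioi (0 : ℝ),
        (∫ ω : ↥(Metric.sphere (0 : EuclideanSpace ℝ (Fin (n - 1))) 1),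
          f (r • (ω : EuclideanSpace ℝ (Fin (n - 1)))) ∂σ) * r ^ (n - 2))
    (α : EuclideanSpace ℝ (Fin (n - 1)) → ℝ)
    (hαcont : ContinuousOn α (Metric.sphere (0 : EuclideanSpace ℝ (Fin (n - 1))) 1))
    (hαpos : ∀ ω ∈ Metric.sphere (0 : EuclideanSpace ℝ (Fin (n - 1))) 1, 0 < α ω)
    (K : ℝ → EuclideanSpace ℝ (Fin (n - 1)) → ℝ)
    (hK : ∀ (X : ℝ) (Y : EuclideanSpace ℝ (Fin (n - 1))),
      K X Y = Real.exp (-(F * X)) * ‖Y‖ ^ ((1 : ℝ) - n) *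
        (Real.exp (-(F * ((X - α (‖Y‖⁻¹ • Y) * ‖Y‖ ^ 2) / ‖Y‖) ^ 2 / (2 * α (‖Y‖⁻¹ • Y))))
          + Real.exp (-(F * ((-X + α (-(‖Y‖⁻¹ • Y)) * ‖Y‖ ^ 2) / ‖Y‖) ^ 2 /
              (2 * α (-(‖Y‖⁻¹ • Y))))))) :
    Integrable (fun p : ℝ × EuclideanSpace ℝ (Fin (n - 1)) => K p.1 p.2) ∧
    ∀ (ξ : ℝ) (η : EuclideanSpace ℝ (Fin (n - 1))),
      (∫ X : ℝ, ∫ Y : EuclideanSpace ℝ (Fin (n - 1)),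
          Complex.exp (-(Complex.I * (ξ * X + (⟪η, Y⟫ : ℝ)))) * (K X Y : ℝ))
        = ((2 * Real.pi / Real.sqrt (ξ ^ 2 + F ^ 2) *
            ∫ ω : ↥(Metric.sphere (0 : EuclideanSpace ℝ (Fin (n - 1))) 1),
              Real.exp (-(F * (⟪η, (ω : EuclideanSpace ℝ (Fin (n - 1)))⟫ : ℝ) ^ 2 /
                (2 * (ξ ^ 2 + F ^ 2) * α (ω : EuclideanSpace ℝ (Fin (n - 1)))))) ∂σ : ℝ) : ℂ) := by
  have : Nonempty (Fin (n - 1)) := ⟨⟨0, by omega⟩⟩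
  have hdim : finrank ℝ (EuclideanSpace ℝ (Fin (n - 1))) = n - 1 := finrank_euclideanSpace_fin
  obtain rfl : K = boundaryKernel F α := eq_boundaryKernel (by omega) hK
  obtain ⟨hint, hfourier⟩ := stmt12_general volume hF σ
    (by rwa [hdim, Nat.sub_sub]) hαcont.domRestrict.measurable hαpos
  exact ⟨hint, fun ξ η ↦ by simpa using hfourier ξ (innerSL ℝ η)⟩
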